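/- arXiv:1405.5318 — 2 statements merged into one kernel-verified Lean document; each statement's English description precedes it below -/
import Mathlib

section
/- For all τ in the complex upper half-plane, the Hauptmodul ζ = ζ(τ) satisfies: ζ = −2φ1φ2²φ5³/(φ3φ4²), ζ+1 = −φ1²φ2φ5³/(φ3²φ4), ζ−1 = −3φ1²φ2φ3²φ5/φ4, ζ+2 = 6φ1φ2²φ4²φ5/φ3, and 2ζ+1 = −3φ5¹⁰/(φ3⁴φ4⁴), where φ_j = φ_j(τ). -/
open Complex

/-- The theta product θ(x;p) = ∏_{j≥0} (1 - pʲx)(1 - pʲ⁺¹x⁻¹). -/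
noncomputable def jtheta (x p : ℂ) : ℂ :=
  ∏' j : ℕ, ((1 - p ^ j * x) * (1 - p ^ (j + 1) * x⁻¹))

/-- Dedekind's eta function η(τ) = e^{πiτ/12} ∏_{j≥1} (1 - e^{2πijτ}). -/
noncomputable def dedekindEta (τ : ℂ) : ℂ :=
  Complex.exp ((Real.pi : ℂ) * Complex.I * τ / 12) *
    ∏' j : ℕ, (1 - Complex.exp (2 * (Real.pi : ℂ) * Complex.I * (j + 1) * τ))

/-- The eta quotient φ₁ = η(τ/2)²/η(τ)². -/
noncomputable def phi1 (τ : ℂ) : ℂ := dedekindEta (τ / 2) ^ 2 / dedekindEta τ ^ 2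

/-- The eta quotient φ₂ = η(2τ)²/η(τ)². -/
noncomputable def phi2 (τ : ℂ) : ℂ := dedekindEta (2 * τ) ^ 2 / dedekindEta τ ^ 2

/-- The eta quotient φ₃ = η(3τ/2)/η(τ/2). -/
noncomputable def phi3 (τ : ℂ) : ℂ := dedekindEta (3 * τ / 2) / dedekindEta (τ / 2)

/-- The eta quotient φ₄ = η(6τ)/η(2τ). -/
noncomputable def phi4 (τ : ℂ) : ℂ := dedekindEta (6 * τ) / dedekindEta (2 * τ)

/-- The eta quotient φ₅ = η(3τ)/η(τ). -/
noncomputable def phi5 (τ : ℂ) : ℂ := dedekindEta (3 * τ) / dedekindEta τ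

/-- The Hauptmodul ζ(τ) = ω²θ(-1;p²)θ(-pω;p²)/(θ(-p;p²)θ(-ω;p²)),
with p = e^{πiτ} and ω = e^{2πi/3}. -/
noncomputable def hauptmodul (τ : ℂ) : ℂ :=
  let p := Complex.exp ((Real.pi : ℂ) * Complex.I * τ)
  let ω := Complex.exp (2 * (Real.pi : ℂ) * Complex.I / 3)
  ω ^ 2 * jtheta (-1) (p ^ 2) * jtheta (-(p * ω)) (p ^ 2)
    / (jtheta (-p) (p ^ 2) * jtheta (-ω) (p ^ 2))

/-!
By the Jacobi triple product, a theta product is a constant multiple of the series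
`∑ p^(k²) z^k`. Sorting the terms of a product of two such series by the parity of the sum of the
two indices expresses `θ(xy)θ(x/y)` as a `2 × 2` minor in functions of `x` and `y`, so the Plücker
relation gives Weierstrass' three-term relation. With all arguments chosen among `±1`, `±p` and
their multiples by a primitive cube root of unity, that relation turns each of `ζ + 1`, `ζ - 1`,
`ζ + 2` and `2ζ + 1` into a single quotient of theta constants. Up to a numerical factor each of
these constants is an eta quotient times a power of `e^{πiτ/24}`, and these powers cancel.
-/

open Filter Topology

section QPochhammer

/-- The infinite `q`-Pochhammer symbol `(x; q)_∞`. The Euler function `(q; q)_∞` is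
`qPochhammer q q`. -/
noncomputable def qPochhammer (x q : ℂ) : ℂ := ∏' j : ℕ, (1 - q ^ j * x)

variable {q : ℂ}

lemma norm_pow_lt_one_of_norm_lt_one (hq : ‖q‖ < 1) {n : ℕ} (hn : n ≠ 0) : ‖q ^ n‖ < 1 := by
  rw [norm_pow]
  exact pow_lt_one₀ (norm_nonneg q) hq hn

lemma summable_norm_neg_pow_mul (x : ℂ) (hq : ‖q‖ < 1) :
    Summable fun j : ℕ ↦ ‖-(q ^ j * x)‖ := by
  simp only [norm_neg, norm_mul, norm_pow]
  exact (summable_geometric_of_lt_one (norm_nonneg q) hq).mul_right _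

lemma multipliable_one_sub_pow_mul (x : ℂ) (hq : ‖q‖ < 1) :
    Multipliable fun j : ℕ ↦ 1 - q ^ j * x := by
  simpa only [sub_eq_add_neg] using
    multipliable_one_add_of_summable (summable_norm_neg_pow_mul x hq)

lemma multipliable_one_sub_pow_succ_mul (x : ℂ) (hq : ‖q‖ < 1) :
    Multipliable fun j : ℕ ↦ 1 - q ^ (j + 1) * x := by
  simpa only [pow_succ, mul_assoc] using multipliable_one_sub_pow_mul (q * x) hq

lemma qPochhammer_ne_zero {x : ℂ} (hq : ‖q‖ < 1) (hx : ‖x‖ < 1) : qPochhammer x q ≠ 0 := by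
  have factor_ne_zero (j : ℕ) : 1 + -(q ^ j * x) ≠ 0 := by
    have norm_lt : ‖q ^ j * x‖ < 1 := by
      rw [norm_mul, norm_pow]
      exact mul_lt_one_of_nonneg_of_lt_one_right (pow_le_one₀ (norm_nonneg q) hq.le)
        (norm_nonneg x) hx
    rw [← sub_eq_add_neg, sub_ne_zero]
    intro h
    simp [← h] at norm_lt
  simpa only [qPochhammer, sub_eq_add_neg] using
    tprod_one_add_ne_zero_of_summable factor_ne_zero (summable_norm_neg_pow_mul x hq)

lemma qPochhammer_eq_one_sub_mul (x : ℂ) (hq : ‖q‖ < 1) :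
    qPochhammer x q = (1 - x) * qPochhammer (q * x) q := by
  unfold qPochhammer
  rw [tprod_eq_zero_mul' (f := fun j : ℕ ↦ 1 - q ^ j * x)
    (multipliable_one_sub_pow_succ_mul x hq)]
  simp only [pow_zero, one_mul, pow_succ, mul_assoc]

lemma qPochhammer_mul_qPochhammer_neg (x : ℂ) (hq : ‖q‖ < 1) :
    qPochhammer x q * qPochhammer (-x) q = qPochhammer (x ^ 2) (q ^ 2) := by
  unfold qPochhammer
  rw [← (multipliable_one_sub_pow_mul x hq).tprod_mul (multipliable_one_sub_pow_mul (-x) hq)]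
  exact tprod_congr fun j ↦ by ring

lemma qPochhammer_sq_mul_qPochhammer_sq (x : ℂ) (hq : ‖q‖ < 1) :
    qPochhammer x (q ^ 2) * qPochhammer (q * x) (q ^ 2) = qPochhammer x q := by
  have hq2 := norm_pow_lt_one_of_norm_lt_one hq two_ne_zero
  have even_eq (j : ℕ) : 1 - (q ^ 2) ^ j * x = 1 - q ^ (2 * j) * x := by rw [pow_mul]
  have odd_eq (j : ℕ) : 1 - (q ^ 2) ^ j * (q * x) = 1 - q ^ (2 * j + 1) * x := by
    rw [pow_succ q (2 * j), pow_mul, mul_assoc]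
  have even_multipliable := multipliable_one_sub_pow_mul x hq2
  have odd_multipliable := multipliable_one_sub_pow_mul (q * x) hq2
  simp only [even_eq, odd_eq] at even_multipliable odd_multipliable
  simpa only [qPochhammer, even_eq, odd_eq] using
    tprod_even_mul_odd (f := fun j : ℕ ↦ 1 - q ^ j * x) even_multipliable odd_multipliable

lemma qPochhammer_mul_cube_roots (x : ℂ) {w : ℂ} (hq : ‖q‖ < 1) (hw : w ^ 2 + w + 1 = 0) :
    qPochhammer x q * (qPochhammer (x * w) q * qPochhammer (x * w ^ 2) q) =
      qPochhammer (x ^ 3) (q ^ 3) := by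
  have hx := multipliable_one_sub_pow_mul x hq
  have hxw := multipliable_one_sub_pow_mul (x * w) hq
  have hxw2 := multipliable_one_sub_pow_mul (x * w ^ 2) hq
  unfold qPochhammer
  rw [← hxw.tprod_mul hxw2, ← hx.tprod_mul (hxw.mul hxw2)]
  refine tprod_congr fun j ↦ ?_
  rw [pow_right_comm]
  generalize q ^ j = y
  linear_combination (-(y * x) + w * x ^ 2 * y ^ 2 - (w - 1) * y ^ 3 * x ^ 3) * hw

lemma qPochhammer_neg_self (hq : ‖q‖ < 1) :
    qPochhammer (-q) q = qPochhammer (q ^ 2) (q ^ 2) / qPochhammer q q := by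
  rw [eq_div_iff (qPochhammer_ne_zero hq hq), mul_comm, qPochhammer_mul_qPochhammer_neg q hq]

lemma qPochhammer_self_sq (hq : ‖q‖ < 1) :
    qPochhammer q (q ^ 2) = qPochhammer q q / qPochhammer (q ^ 2) (q ^ 2) := by
  have hq2 := norm_pow_lt_one_of_norm_lt_one hq two_ne_zero
  rw [eq_div_iff (qPochhammer_ne_zero hq2 hq2), ← qPochhammer_sq_mul_qPochhammer_sq q hq, sq]

lemma qPochhammer_self_sq_mul_neg_self_sq_mul_neg_sq (hq : ‖q‖ < 1) :
    qPochhammer q (q ^ 2) * qPochhammer (-q) (q ^ 2) * qPochhammer (-q ^ 2) (q ^ 2) = 1 := by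
  have hq2 := norm_pow_lt_one_of_norm_lt_one hq two_ne_zero
  have hq4 := norm_pow_lt_one_of_norm_lt_one hq2 two_ne_zero
  rw [qPochhammer_mul_qPochhammer_neg q hq2, qPochhammer_neg_self hq2, qPochhammer_self_sq hq2]
  have h2 := qPochhammer_ne_zero hq2 hq2
  have h4 := qPochhammer_ne_zero hq4 hq4
  rw [div_mul_div_cancel₀ h4, div_self h2]

end QPochhammer

section ThetaProduct

variable {q : ℂ}

lemma multipliable_jtheta (x : ℂ) (hq : ‖q‖ < 1) :
    Multipliable fun j : ℕ ↦ (1 - q ^ j * x) * (1 - q ^ (j + 1) * x⁻¹) :=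
  (multipliable_one_sub_pow_mul x hq).mul (multipliable_one_sub_pow_succ_mul x⁻¹ hq)

lemma jtheta_eq_qPochhammer_mul (x : ℂ) (hq : ‖q‖ < 1) :
    jtheta x q = qPochhammer x q * qPochhammer (q * x⁻¹) q := by
  unfold jtheta
  rw [(multipliable_one_sub_pow_mul x hq).tprod_mul (multipliable_one_sub_pow_succ_mul x⁻¹ hq)]
  simp only [qPochhammer, pow_succ, mul_assoc]

lemma jtheta_inv {x : ℂ} (hx : x ≠ 0) (hq : ‖q‖ < 1) : jtheta x⁻¹ q = -(x⁻¹ * jtheta x q) := by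
  rw [jtheta_eq_qPochhammer_mul _ hq, jtheta_eq_qPochhammer_mul _ hq,
    qPochhammer_eq_one_sub_mul x hq, qPochhammer_eq_one_sub_mul x⁻¹ hq, inv_inv]
  field_simp
  ring

lemma jtheta_mul_inv (x : ℂ) (hq0 : q ≠ 0) (hq : ‖q‖ < 1) : jtheta (q * x⁻¹) q = jtheta x q := by
  rw [jtheta_eq_qPochhammer_mul _ hq, jtheta_eq_qPochhammer_mul _ hq, mul_inv, inv_inv,
    mul_inv_cancel_left₀ hq0, mul_comm]

lemma jtheta_ne_zero {x : ℂ} (hqx : ‖q‖ < ‖x‖) (hx : ‖x‖ ≤ 1) (hx1 : x ≠ 1) : jtheta x q ≠ 0 := by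
  have hq := hqx.trans_le hx
  have norm_mul_lt : ‖q * x‖ < 1 := by
    rw [norm_mul]
    exact mul_lt_one_of_nonneg_of_lt_one_left (norm_nonneg q) hq hx
  have norm_mul_inv_lt : ‖q * x⁻¹‖ < 1 := by
    rw [norm_mul, norm_inv, ← div_eq_mul_inv]
    exact (div_lt_one ((norm_nonneg q).trans_lt hqx)).2 hqx
  rw [jtheta_eq_qPochhammer_mul _ hq, qPochhammer_eq_one_sub_mul x hq]
  exact mul_ne_zero
    (mul_ne_zero (sub_ne_zero.2 hx1.symm) (qPochhammer_ne_zero hq norm_mul_lt))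
    (qPochhammer_ne_zero hq norm_mul_inv_lt)

lemma jtheta_sq_eq_mul {p : ℂ} (x : ℂ) (hp0 : p ≠ 0) (hp : ‖p‖ < 1) :
    jtheta (x ^ 2) (p ^ 2) = jtheta x (p ^ 2) * jtheta (-x) (p ^ 2) *
      (jtheta (p * x) (p ^ 2) * jtheta (-(p * x)) (p ^ 2)) := by
  have hq := norm_pow_lt_one_of_norm_lt_one hp two_ne_zero
  have inv_neg_eq : p ^ 2 * (-x)⁻¹ = -(p ^ 2 * x⁻¹) := by rw [inv_neg, mul_neg]
  have inv_mul_eq : p ^ 2 * (p * x)⁻¹ = p * x⁻¹ := by rw [mul_inv]; field_simp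
  have inv_neg_mul_eq : p ^ 2 * (-(p * x))⁻¹ = -(p * x⁻¹) := by rw [inv_neg, mul_neg, inv_mul_eq]
  simp only [jtheta_eq_qPochhammer_mul _ hq, inv_neg_eq, inv_mul_eq, inv_neg_mul_eq]
  rw [← qPochhammer_sq_mul_qPochhammer_sq (x ^ 2) hq,
    ← qPochhammer_sq_mul_qPochhammer_sq (p ^ 2 * (x ^ 2)⁻¹) hq,
    show p ^ 2 * (p ^ 2 * (x ^ 2)⁻¹) = (p ^ 2 * x⁻¹) ^ 2 by ring,
    show p ^ 2 * (x ^ 2)⁻¹ = (p * x⁻¹) ^ 2 by ring, ← mul_pow p x 2]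
  simp only [← qPochhammer_mul_qPochhammer_neg _ hq]
  ring

end ThetaProduct

section GaussianBinomial

variable {K : Type*} [Field K] {q : K}

/-- The reciprocal `1 / (q; q)_m` of the finite Euler product, extended by `0` to negative `m`. -/
def invQFactorial (q : K) : ℤ → K
  | (m : ℕ) => (∏ i ∈ Finset.range m, (1 - q ^ (i + 1)))⁻¹
  | Int.negSucc _ => 0

/-- The Gaussian binomial coefficient `[2n choose n + k]_q`, which vanishes unless
`-n ≤ k ≤ n`. -/
def centralGaussBinom (q : K) (n : ℕ) (k : ℤ) : K :=
  (∏ i ∈ Finset.range (2 * n), (1 - q ^ (i + 1))) *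
    (invQFactorial q (n - k) * invQFactorial q (n + k))

lemma invQFactorial_of_neg {m : ℤ} (hm : m < 0) : invQFactorial q m = 0 := by
  obtain ⟨n, rfl⟩ := Int.eq_negSucc_of_lt_zero hm
  rfl

lemma invQFactorial_sub_one (hq : ∀ i : ℕ, 1 - q ^ (i + 1) ≠ 0) (m : ℤ) :
    invQFactorial q (m - 1) = (1 - q ^ m) * invQFactorial q m := by
  rcases lt_trichotomy m 0 with hm | rfl | hm
  · rw [invQFactorial_of_neg hm, invQFactorial_of_neg (by lia), mul_zero]
  · rw [invQFactorial_of_neg (by lia), zpow_zero, sub_self, zero_mul]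
  · obtain ⟨n, rfl⟩ := Int.eq_succ_of_zero_lt hm
    rw [add_sub_cancel_right, ← Nat.cast_succ]
    simp only [invQFactorial, zpow_natCast, Finset.prod_range_succ, mul_inv_rev]
    rw [mul_inv_cancel_left₀ (hq n)]

lemma centralGaussBinom_zero_eq_zero {k : ℤ} (hk : k ≠ 0) : centralGaussBinom q 0 k = 0 := by
  unfold centralGaussBinom
  rcases hk.lt_or_gt with hk | hk
  · rw [invQFactorial_of_neg (m := (0 : ℕ) + k) (by simpa using hk)]; ring
  · rw [invQFactorial_of_neg (m := (0 : ℕ) - k) (by simpa using hk)]; ring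

lemma centralGaussBinom_succ (hq0 : q ≠ 0) (hq : ∀ i : ℕ, 1 - q ^ (i + 1) ≠ 0) (n : ℕ) (k : ℤ) :
    centralGaussBinom q (n + 1) k =
      (1 + q ^ (2 * n + 1)) * centralGaussBinom q n k +
        q ^ ((n : ℤ) + 1 - k) * centralGaussBinom q n (k - 1) +
        q ^ ((n : ℤ) + 1 + k) * centralGaussBinom q n (k + 1) := by
  have lower (m l : ℤ) (h : l = m - 1) :
      invQFactorial q l = (1 - q ^ m) * invQFactorial q m := h ▸ invQFactorial_sub_one hq m
  unfold centralGaussBinom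
  rw [lower (n - k) (n - (k + 1)) (by ring), lower (n - k + 1) (n - k) (by ring),
    lower (n + k) (n + (k - 1)) (by ring), lower (n + k + 1) (n + k) (by ring),
    show (n : ℤ) - (k - 1) = n - k + 1 by ring, show (n : ℤ) + (k + 1) = n + k + 1 by ring,
    show ((n + 1 : ℕ) : ℤ) - k = n - k + 1 by push_cast; ring,
    show ((n + 1 : ℕ) : ℤ) + k = n + k + 1 by push_cast; ring,
    show 2 * (n + 1) = 2 * n + 1 + 1 by ring, Finset.prod_range_succ, Finset.prod_range_succ]
  have hqk : q ^ k ≠ 0 := zpow_ne_zero k hq0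
  simp only [zpow_add₀ hq0, zpow_sub₀ hq0, zpow_one, zpow_natCast, pow_add, pow_one, two_mul]
  field_simp
  ring_nf

variable [TopologicalSpace K] [IsTopologicalRing K]

lemma hasSum_finite_tripleProduct {p z : K} (hp0 : p ≠ 0) (hp : ∀ i : ℕ, 1 - (p ^ 2) ^ (i + 1) ≠ 0)
    (hz : z ≠ 0) (n : ℕ) :
    HasSum (fun k : ℤ ↦ centralGaussBinom (p ^ 2) n k * (p ^ k ^ 2 * z ^ k))
      (∏ j ∈ Finset.range n, ((1 + p ^ (2 * j + 1) * z) * (1 + p ^ (2 * j + 1) * z⁻¹))) := by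
  induction n with
  | zero =>
    convert hasSum_single (0 : ℤ) fun k hk ↦ ?_ using 1
    · simp [centralGaussBinom, invQFactorial]
    · rw [centralGaussBinom_zero_eq_zero hk, zero_mul]
  | succ n ih =>
    have middle := ih.mul_left (1 + (p ^ 2) ^ (2 * n + 1))
    have left := ((Equiv.subRight (1 : ℤ)).hasSum_iff.mpr ih).mul_left (p ^ (2 * n + 1) * z)
    have right := ((Equiv.addRight (1 : ℤ)).hasSum_iff.mpr ih).mul_left (p ^ (2 * n + 1) * z⁻¹)
    have square_sub_one (k : ℤ) :
        (p ^ 2) ^ ((n : ℤ) + 1 - k) * p ^ k ^ 2 = p ^ (2 * n + 1) * p ^ (k - 1) ^ 2 := by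
      simp only [← zpow_natCast p, ← zpow_mul, ← zpow_add₀ hp0]
      congr 1; push_cast; ring
    have square_add_one (k : ℤ) :
        (p ^ 2) ^ ((n : ℤ) + 1 + k) * p ^ k ^ 2 = p ^ (2 * n + 1) * p ^ (k + 1) ^ 2 := by
      simp only [← zpow_natCast p, ← zpow_mul, ← zpow_add₀ hp0]
      congr 1; push_cast; ring
    have term_eq (k : ℤ) : centralGaussBinom (p ^ 2) (n + 1) k * (p ^ k ^ 2 * z ^ k) =
        (1 + (p ^ 2) ^ (2 * n + 1)) * (centralGaussBinom (p ^ 2) n k * (p ^ k ^ 2 * z ^ k)) +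
          p ^ (2 * n + 1) * z *
            (centralGaussBinom (p ^ 2) n (k - 1) * (p ^ (k - 1) ^ 2 * z ^ (k - 1))) +
          p ^ (2 * n + 1) * z⁻¹ *
            (centralGaussBinom (p ^ 2) n (k + 1) * (p ^ (k + 1) ^ 2 * z ^ (k + 1))) := by
      rw [centralGaussBinom_succ (pow_ne_zero 2 hp0) hp, zpow_sub₀ hz, zpow_add₀ hz, zpow_one]
      field_simp
      linear_combination centralGaussBinom (p ^ 2) n (k - 1) * square_sub_one k +
        centralGaussBinom (p ^ 2) n (k + 1) * square_add_one k
    have factor_eq : (1 + p ^ (2 * n + 1) * z) * (1 + p ^ (2 * n + 1) * z⁻¹) =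
        1 + (p ^ 2) ^ (2 * n + 1) + p ^ (2 * n + 1) * z + p ^ (2 * n + 1) * z⁻¹ := by
      field_simp
      ring
    rw [Finset.prod_range_succ, factor_eq, mul_comm, add_mul, add_mul, funext term_eq]
    exact (middle.add left).add right

end GaussianBinomial

section ThetaSeries

/-- The theta series `∑ p^(k²) z^k` in multiplicative coordinates: with `p = e^{πiτ}` and
`z = e^{2πiu}` it is Mathlib's `jacobiTheta₂ u τ`. -/
noncomputable def thetaSeries (p z : ℂ) : ℂ := ∑' k : ℤ, p ^ k ^ 2 * z ^ k

variable {p : ℂ}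

lemma summable_norm_thetaSeries_term {z : ℂ} (hp0 : p ≠ 0) (hp : ‖p‖ < 1) (hz : z ≠ 0) :
    Summable fun k : ℤ ↦ ‖p ^ k ^ 2 * z ^ k‖ := by
  set τ := Function.Periodic.invQParam 2 p with τ_def
  set u := Function.Periodic.invQParam 1 z with u_def
  have exp_τ : exp (Real.pi * I * τ) = p := by
    rw [← Function.Periodic.qParam_right_inv two_ne_zero hp0, Function.Periodic.qParam, τ_def]
    congr 1; push_cast; ring
  have exp_u : exp (2 * Real.pi * I * u) = z := by
    rw [← Function.Periodic.qParam_right_inv one_ne_zero hz, Function.Periodic.qParam, u_def]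
    congr 1; push_cast; ring
  have im_pos : 0 < τ.im := by
    rw [τ_def, Function.Periodic.im_invQParam]
    exact mul_pos_of_neg_of_neg (by simp [neg_div, Real.pi_pos])
      (Real.log_neg (norm_pos_iff.2 hp0) hp)
  refine ((summable_jacobiTheta₂_term_iff u τ).2 im_pos).norm.congr fun k ↦ ?_
  rw [jacobiTheta₂_term, exp_add, ← exp_τ, ← exp_u, ← exp_int_mul, ← exp_int_mul, mul_comm]
  congr 3 <;> push_cast <;> ring

lemma thetaSeries_div_self {z : ℂ} (hp0 : p ≠ 0) (hz : z ≠ 0) :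
    thetaSeries p (z / p) = z * thetaSeries p (p * z) := by
  unfold thetaSeries
  rw [← tsum_mul_left, ← (Equiv.addRight (1 : ℤ)).tsum_eq]
  refine tsum_congr fun k ↦ ?_
  rw [Equiv.coe_addRight, div_zpow, mul_zpow, show (k + 1) ^ 2 = k ^ 2 + (k + 1) + k by ring,
    zpow_add₀ hp0, zpow_add₀ hp0 (k ^ 2), zpow_add₀ hz, zpow_one]
  field_simp

lemma bijective_sum_elim_add_sub : Function.Bijective
    (Sum.elim (fun s : ℤ × ℤ ↦ (s.1 + s.2, s.1 - s.2))
      (fun s : ℤ × ℤ ↦ (s.1 + s.2 + 1, s.1 - s.2))) := by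
  constructor
  · rintro (⟨a, b⟩ | ⟨a, b⟩) (⟨c, d⟩ | ⟨c, d⟩) h <;>
      simp only [Sum.elim_inl, Sum.elim_inr, Prod.mk.injEq] at h <;> grind
  · rintro ⟨m, n⟩
    obtain ⟨c, hc | hc⟩ := Int.even_or_odd' (m + n)
    · exact ⟨.inl (c, m - c), by simp only [Sum.elim_inl, Prod.mk.injEq]; lia⟩
    · exact ⟨.inr (c, m - c - 1), by simp only [Sum.elim_inr, Prod.mk.injEq]; lia⟩

lemma tsum_int_prod_eq_even_add_odd {E : Type*} [NormedAddCommGroup E] [CompleteSpace E]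
    {f : ℤ × ℤ → E} (hf : Summable f) :
    ∑' s, f s = ∑' s : ℤ × ℤ, f (s.1 + s.2, s.1 - s.2) +
      ∑' s : ℤ × ℤ, f (s.1 + s.2 + 1, s.1 - s.2) := by
  let e := Equiv.ofBijective _ bijective_sum_elim_add_sub
  have hfe : Summable (f ∘ e) := e.summable_iff.2 hf
  rw [← e.tsum_eq]
  exact (hfe.comp_injective Sum.inl_injective).tsum_sum (hfe.comp_injective Sum.inr_injective)

lemma sq_zpow_eq {G : Type*} [DivisionMonoid G] (c : G) (m : ℤ) : (c ^ 2) ^ m = c ^ (2 * m) := by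
  rw [zpow_mul, zpow_ofNat]

lemma thetaSeries_term_mul_even {K : Type*} [Field K] {p a b : K} (hp0 : p ≠ 0) (ha : a ≠ 0)
    (hb : b ≠ 0) (m n : ℤ) :
    p ^ (m + n) ^ 2 * (a * b) ^ (m + n) * (p ^ (m - n) ^ 2 * (a / b) ^ (m - n)) =
      (p ^ 2) ^ m ^ 2 * (a ^ 2) ^ m * ((p ^ 2) ^ n ^ 2 * (b ^ 2) ^ n) := by
  have p_pow : p ^ (m + n) ^ 2 * p ^ (m - n) ^ 2 = p ^ (2 * m ^ 2) * p ^ (2 * n ^ 2) := by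
    rw [← zpow_add₀ hp0, ← zpow_add₀ hp0]; ring_nf
  have a_pow : a ^ (m + n) * a ^ (m - n) = a ^ (2 * m) := by rw [← zpow_add₀ ha]; ring_nf
  have b_pow : b ^ (m + n) = b ^ (2 * n) * b ^ (m - n) := by rw [← zpow_add₀ hb]; ring_nf
  simp only [sq_zpow_eq, mul_zpow, div_zpow, ← a_pow, b_pow]
  field_simp
  linear_combination p_pow

lemma thetaSeries_term_mul_odd {K : Type*} [Field K] {p a b : K} (hp0 : p ≠ 0) (ha : a ≠ 0)
    (hb : b ≠ 0) (m n : ℤ) :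
    p ^ (m + n + 1) ^ 2 * (a * b) ^ (m + n + 1) * (p ^ (m - n) ^ 2 * (a / b) ^ (m - n)) =
      p * a * b * ((p ^ 2) ^ m ^ 2 * ((p * a) ^ 2) ^ m *
        ((p ^ 2) ^ n ^ 2 * ((p * b) ^ 2) ^ n)) := by
  have p_pow : p ^ (m + n + 1) ^ 2 * p ^ (m - n) ^ 2 =
      p * (p ^ (m + n) ^ 2 * p ^ (m - n) ^ 2) * (p ^ (2 * m) * p ^ (2 * n)) := by
    rw [← zpow_add₀ hp0, ← zpow_add₀ hp0, ← zpow_add₀ hp0, ← zpow_one_add₀ hp0, ← zpow_add₀ hp0]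
    ring_nf
  have even_term := thetaSeries_term_mul_even hp0 ha hb m n
  simp only [sq_zpow_eq, mul_zpow p, zpow_add_one₀ (mul_ne_zero ha hb)] at even_term ⊢
  linear_combination (a * b) ^ (m + n) * (a * b) * (a / b) ^ (m - n) * p_pow +
    p * a * b * (p ^ (2 * m) * p ^ (2 * n)) * even_term

lemma thetaSeries_mul_thetaSeries {z w : ℂ} (hp0 : p ≠ 0) (hp : ‖p‖ < 1) (hz : z ≠ 0)
    (hw : w ≠ 0) :
    thetaSeries p z * thetaSeries p w =
      ∑' s : ℤ × ℤ, p ^ s.1 ^ 2 * z ^ s.1 * (p ^ s.2 ^ 2 * w ^ s.2) :=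
  tsum_mul_tsum_of_summable_norm (summable_norm_thetaSeries_term hp0 hp hz)
    (summable_norm_thetaSeries_term hp0 hp hw)

lemma thetaSeries_mul_mul_thetaSeries_div {a b : ℂ} (hp0 : p ≠ 0) (hp : ‖p‖ < 1) (ha : a ≠ 0)
    (hb : b ≠ 0) :
    thetaSeries p (a * b) * thetaSeries p (a / b) =
      thetaSeries (p ^ 2) (a ^ 2) * thetaSeries (p ^ 2) (b ^ 2) +
        p * a * b * (thetaSeries (p ^ 2) ((p * a) ^ 2) * thetaSeries (p ^ 2) ((p * b) ^ 2)) := by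
  have product_sq {c d : ℂ} (hc : c ≠ 0) (hd : d ≠ 0) :=
    thetaSeries_mul_thetaSeries (pow_ne_zero 2 hp0)
      (norm_pow_lt_one_of_norm_lt_one hp two_ne_zero) (pow_ne_zero 2 hc) (pow_ne_zero 2 hd)
  have summable_product := summable_mul_of_summable_norm
    (summable_norm_thetaSeries_term hp0 hp (mul_ne_zero ha hb))
    (summable_norm_thetaSeries_term hp0 hp (div_ne_zero ha hb))
  rw [thetaSeries_mul_thetaSeries hp0 hp (mul_ne_zero ha hb) (div_ne_zero ha hb),
    tsum_int_prod_eq_even_add_odd summable_product, product_sq ha hb,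
    product_sq (mul_ne_zero hp0 ha) (mul_ne_zero hp0 hb), ← tsum_mul_left]
  exact congrArg₂ _ (tsum_congr fun s ↦ thetaSeries_term_mul_even hp0 ha hb s.1 s.2)
    (tsum_congr fun s ↦ thetaSeries_term_mul_odd hp0 ha hb s.1 s.2)

end ThetaSeries

section TripleProduct

variable {p q : ℂ}

lemma one_sub_pow_succ_ne_zero (hq : ‖q‖ < 1) (i : ℕ) : 1 - q ^ (i + 1) ≠ 0 := by
  rw [sub_ne_zero]
  intro h
  simpa [← h] using norm_pow_lt_one_of_norm_lt_one hq i.succ_ne_zero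

lemma tendsto_prod_one_sub_pow_succ (hq : ‖q‖ < 1) :
    Tendsto (fun n : ℕ ↦ ∏ i ∈ Finset.range n, (1 - q ^ (i + 1))) atTop
      (𝓝 (qPochhammer q q)) := by
  simpa only [qPochhammer, pow_succ] using
    (multipliable_one_sub_pow_mul q hq).hasProd.tendsto_prod_nat

lemma tendsto_invQFactorial (hq : ‖q‖ < 1) :
    Tendsto (invQFactorial q) atTop (𝓝 (qPochhammer q q)⁻¹) := by
  rw [← Nat.map_cast_int_atTop, tendsto_map'_iff]
  exact (tendsto_prod_one_sub_pow_succ hq).inv₀ (qPochhammer_ne_zero hq hq)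

lemma exists_norm_invQFactorial_le (hq : ‖q‖ < 1) : ∃ M, ∀ m, ‖invQFactorial q m‖ ≤ M := by
  obtain ⟨M, hM⟩ := ((tendsto_prod_one_sub_pow_succ hq).inv₀
    (qPochhammer_ne_zero hq hq)).norm.bddAbove_range
  refine ⟨M, fun m ↦ ?_⟩
  rcases m with m | m
  · exact hM ⟨m, rfl⟩
  · simpa only [invQFactorial, norm_zero] using (norm_nonneg _).trans (hM ⟨0, rfl⟩)

lemma exists_norm_centralGaussBinom_le (hq : ‖q‖ < 1) :
    ∃ M, ∀ n k, ‖centralGaussBinom q n k‖ ≤ M := by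
  obtain ⟨M, hM⟩ := (tendsto_prod_one_sub_pow_succ hq).norm.bddAbove_range
  obtain ⟨N, hN⟩ := exists_norm_invQFactorial_le hq
  have hM0 : 0 ≤ M := (norm_nonneg _).trans (hM ⟨0, rfl⟩)
  have hN0 : 0 ≤ N := (norm_nonneg _).trans (hN 0)
  refine ⟨M * (N * N), fun n k ↦ ?_⟩
  rw [centralGaussBinom, norm_mul, norm_mul]
  gcongr
  exacts [hM ⟨2 * n, rfl⟩, hN _, hN _]

lemma tendsto_centralGaussBinom (hq : ‖q‖ < 1) (k : ℤ) :
    Tendsto (fun n ↦ centralGaussBinom q n k) atTop (𝓝 (qPochhammer q q)⁻¹) := by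
  have double : Tendsto (fun n : ℕ ↦ 2 * n) atTop atTop := tendsto_id.const_mul_atTop' two_pos
  have sub_k : Tendsto (fun n : ℕ ↦ (n : ℤ) - k) atTop atTop :=
    tendsto_atTop_add_const_right _ (-k) tendsto_natCast_atTop_atTop
  have add_k : Tendsto (fun n : ℕ ↦ (n : ℤ) + k) atTop atTop :=
    tendsto_atTop_add_const_right _ k tendsto_natCast_atTop_atTop
  rw [← mul_inv_cancel_left₀ (qPochhammer_ne_zero hq hq) (qPochhammer q q)⁻¹]
  exact ((tendsto_prod_one_sub_pow_succ hq).comp double).mul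
    (((tendsto_invQFactorial hq).comp sub_k).mul ((tendsto_invQFactorial hq).comp add_k))

lemma tendsto_tsum_centralGaussBinom_mul {z : ℂ} (hp0 : p ≠ 0) (hp : ‖p‖ < 1) (hz : z ≠ 0) :
    Tendsto (fun n : ℕ ↦ ∑' k : ℤ, centralGaussBinom (p ^ 2) n k * (p ^ k ^ 2 * z ^ k)) atTop
      (𝓝 ((qPochhammer (p ^ 2) (p ^ 2))⁻¹ * thetaSeries p z)) := by
  have hq := norm_pow_lt_one_of_norm_lt_one hp two_ne_zero
  obtain ⟨M, hM⟩ := exists_norm_centralGaussBinom_le hq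
  rw [thetaSeries, ← tsum_mul_left]
  refine tendsto_tsum_of_dominated_convergence
    ((summable_norm_thetaSeries_term hp0 hp hz).mul_left M)
    (fun k ↦ (tendsto_centralGaussBinom hq k).mul_const _) (.of_forall fun n k ↦ ?_)
  rw [norm_mul]
  gcongr
  exact hM n k

lemma tendsto_prod_jtheta_neg_mul (z : ℂ) (hp0 : p ≠ 0) (hp : ‖p‖ < 1) :
    Tendsto (fun n : ℕ ↦ ∏ j ∈ Finset.range n,
        ((1 + p ^ (2 * j + 1) * z) * (1 + p ^ (2 * j + 1) * z⁻¹))) atTop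
      (𝓝 (jtheta (-(p * z)) (p ^ 2))) := by
  have hq := norm_pow_lt_one_of_norm_lt_one hp two_ne_zero
  refine (multipliable_jtheta (-(p * z)) hq).hasProd.tendsto_prod_nat.congr fun n ↦
    Finset.prod_congr rfl fun j _ ↦ ?_
  rw [inv_neg, mul_inv]
  field_simp
  ring

theorem jacobi_triple_product {z : ℂ} (hp0 : p ≠ 0) (hp : ‖p‖ < 1) (hz : z ≠ 0) :
    jtheta (-(p * z)) (p ^ 2) = (qPochhammer (p ^ 2) (p ^ 2))⁻¹ * thetaSeries p z := by
  have hq := norm_pow_lt_one_of_norm_lt_one hp two_ne_zero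
  refine tendsto_nhds_unique ((tendsto_prod_jtheta_neg_mul z hp0 hp).congr fun n ↦ ?_)
    (tendsto_tsum_centralGaussBinom_mul hp0 hp hz)
  exact (hasSum_finite_tripleProduct hp0 (one_sub_pow_succ_ne_zero hq) hz n).tsum_eq.symm

end TripleProduct

/-- The even half `∑ p^(2k²) x^(2k)` in the splitting of a product of two theta functions. -/
noncomputable def evenTheta (p x : ℂ) : ℂ := thetaSeries (p ^ 2) (x ^ 2)

/-- The odd half `∑ p^(2k² + 2k) x^(2k + 1)` in the splitting of a product of two theta
functions. -/
noncomputable def oddTheta (p x : ℂ) : ℂ := x * thetaSeries (p ^ 2) ((p * x) ^ 2)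

section Weierstrass

variable {p : ℂ}

local notation "ϑ(" x ")" => jtheta x (p ^ 2)

lemma jtheta_mul_mul_jtheta_div {x y : ℂ} (hp0 : p ≠ 0) (hp : ‖p‖ < 1) (hx : x ≠ 0)
    (hy : y ≠ 0) :
    ϑ(x * y) * ϑ(x / y) =
      (qPochhammer (p ^ 2) (p ^ 2))⁻¹ ^ 2 *
        (x * (oddTheta p x * evenTheta p y - evenTheta p x * oddTheta p y)) := by
  have hxp : -(x / p) ≠ 0 := neg_ne_zero.2 (div_ne_zero hx hp0)
  have shift : thetaSeries (p ^ 2) ((-(x / p)) ^ 2) =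
      x ^ 2 * thetaSeries (p ^ 2) ((p * x) ^ 2) := by
    rw [neg_sq, div_pow, thetaSeries_div_self (pow_ne_zero 2 hp0) (pow_ne_zero 2 hx), mul_pow]
  have product := thetaSeries_mul_mul_thetaSeries_div hp0 hp hxp hy
  rw [shift, mul_neg p, mul_div_cancel₀ x hp0, neg_sq] at product
  rw [show x * y = -(p * (-(x / p) * y)) by field_simp,
    show x / y = -(p * (-(x / p) / y)) by field_simp,
    jacobi_triple_product hp0 hp (mul_ne_zero hxp hy),
    jacobi_triple_product hp0 hp (div_ne_zero hxp hy), evenTheta, evenTheta, oddTheta, oddTheta]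
  linear_combination (qPochhammer (p ^ 2) (p ^ 2))⁻¹ ^ 2 * product

-- Up to the factor `x`, `θ(xy)θ(x/y)` is a `2 × 2` minor of the vectors `(oddTheta, evenTheta)`
-- at `x` and `y`, so this is the Plücker relation among four vectors in the plane.
theorem jtheta_weierstrass {s b c d : ℂ} (hp0 : p ≠ 0) (hp : ‖p‖ < 1) (hs : s ≠ 0) (hb : b ≠ 0)
    (hc : c ≠ 0) (hd : d ≠ 0) :
    ϑ(b) * ϑ(s * b) * (ϑ(s * c * d) * ϑ(c / d)) +
        c / d * (ϑ(d) * ϑ(s * d) * (ϑ(s * b * c) * ϑ(b / c))) =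
      ϑ(c) * ϑ(s * c) * (ϑ(s * b * d) * ϑ(b / d)) := by
  obtain ⟨r, rfl⟩ := IsAlgClosed.exists_pow_nat_eq s two_pos
  have hr : r ≠ 0 := ne_zero_pow two_ne_zero hs
  have pair {x y : ℂ} (hx : x ≠ 0) (hy : y ≠ 0) :
      ϑ(r ^ 2 * x * y) * ϑ(x / y) =
        (qPochhammer (p ^ 2) (p ^ 2))⁻¹ ^ 2 * (r * x * (oddTheta p (r * x) * evenTheta p (r * y) -
          evenTheta p (r * x) * oddTheta p (r * y))) := by
    rw [← jtheta_mul_mul_jtheta_div hp0 hp (mul_ne_zero hr hx) (mul_ne_zero hr hy),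
      mul_div_mul_left x y hr]
    ring_nf
  have pair_one {x : ℂ} (hx : x ≠ 0) := pair hx one_ne_zero
  simp only [mul_one, div_one] at pair_one
  rw [mul_comm ϑ(b), mul_comm ϑ(c), mul_comm ϑ(d), pair_one hb,
    pair_one hc, pair_one hd, pair hc hd, pair hb hc, pair hb hd]
  field_simp
  ring

end Weierstrass

/-- The Hauptmodul in terms of the nome `p = e^{πiτ}`, for either primitive cube root of
unity `w`. -/
noncomputable def thetaQuotient (p w : ℂ) : ℂ :=
  w ^ 2 * jtheta (-1) (p ^ 2) * jtheta (-(p * w)) (p ^ 2) /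
    (jtheta (-p) (p ^ 2) * jtheta (-w) (p ^ 2))

section CubeRoot

variable {p w : ℂ}

local notation "ϑ(" x ")" => jtheta x (p ^ 2)

lemma inv_eq_sq_of_pow_three_eq_one {G : Type*} [DivisionMonoid G] {g : G} (hg : g ^ 3 = 1) :
    g⁻¹ = g ^ 2 :=
  inv_eq_of_mul_eq_one_right (by rw [← pow_succ', hg])

lemma sq_add_self_add_one_of_isPrimitiveRoot {R : Type*} [CommRing R] [IsDomain R] {r : R}
    (hr : IsPrimitiveRoot r 3) : r ^ 2 + r + 1 = 0 := by
  have geom_sum := hr.geom_sum_eq_zero (by norm_num)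
  rw [Finset.sum_range_succ, Finset.sum_range_succ, Finset.sum_range_one] at geom_sum
  linear_combination geom_sum

lemma jtheta_primitive_cube_root_ne_zero {q : ℂ} (hq : ‖q‖ < 1) (hw : IsPrimitiveRoot w 3) :
    jtheta w q ≠ 0 := by
  have norm_w : ‖w‖ = 1 := hw.norm'_eq_one three_ne_zero
  exact jtheta_ne_zero (norm_w ▸ hq) norm_w.le (hw.ne_one (by norm_num))

lemma jtheta_cube_root_sq {q : ℂ} (hq : ‖q‖ < 1) (hw : w ^ 3 = 1) :
    jtheta (w ^ 2) q = -(w ^ 2 * jtheta w q) := by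
  rw [← inv_eq_sq_of_pow_three_eq_one hw,
    jtheta_inv (ne_zero_pow three_ne_zero (hw ▸ one_ne_zero)) hq]

lemma jtheta_neg_cube_root_sq {q : ℂ} (hq : ‖q‖ < 1) (hw : w ^ 3 = 1) :
    jtheta (-w ^ 2) q = w ^ 2 * jtheta (-w) q := by
  rw [← inv_eq_sq_of_pow_three_eq_one hw, ← inv_neg,
    jtheta_inv (neg_ne_zero.2 (ne_zero_pow three_ne_zero (hw ▸ one_ne_zero))) hq, inv_neg,
    neg_mul, neg_neg]

lemma jtheta_mul_cube_root_sq (hp0 : p ≠ 0) (hp : ‖p‖ < 1) (hw : w ^ 3 = 1) :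
    ϑ(p * w ^ 2) = ϑ(p * w) := by
  rw [← jtheta_mul_inv (p * w) (pow_ne_zero 2 hp0) (norm_pow_lt_one_of_norm_lt_one hp two_ne_zero),
    mul_inv, inv_eq_sq_of_pow_three_eq_one hw, sq p, mul_assoc, mul_inv_cancel_left₀ hp0]

lemma jtheta_neg_mul_cube_root_sq (hp0 : p ≠ 0) (hp : ‖p‖ < 1) (hw : w ^ 3 = 1) :
    ϑ(-(p * w ^ 2)) = ϑ(-(p * w)) := by
  have h := jtheta_mul_cube_root_sq (neg_ne_zero.2 hp0) (by rwa [norm_neg]) hw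
  rwa [neg_sq, neg_mul, neg_mul] at h

lemma jtheta_neg_sq_mul_cube_root_sq (hp0 : p ≠ 0) (hp : ‖p‖ < 1) (hw : w ^ 3 = 1) :
    ϑ(-(p ^ 2 * w ^ 2)) = ϑ(-w) := by
  rw [← jtheta_mul_inv (-w) (pow_ne_zero 2 hp0) (norm_pow_lt_one_of_norm_lt_one hp two_ne_zero),
    inv_neg, inv_eq_sq_of_pow_three_eq_one hw, mul_neg]

lemma jtheta_neg_cube_root_mul_half_periods (hp0 : p ≠ 0) (hp : ‖p‖ < 1)
    (hw : IsPrimitiveRoot w 3) :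
    ϑ(-w) * (ϑ(p * w) * ϑ(-(p * w))) = -w ^ 2 := by
  have hq := norm_pow_lt_one_of_norm_lt_one hp two_ne_zero
  have duplication := jtheta_sq_eq_mul w hp0 hp
  rw [jtheta_cube_root_sq hq hw.pow_eq_one] at duplication
  refine mul_left_cancel₀ (jtheta_primitive_cube_root_ne_zero hq hw) ?_
  linear_combination -duplication

lemma jtheta_neg_one_eq {q : ℂ} (hq : ‖q‖ < 1) :
    jtheta (-1) q = 2 * qPochhammer (-q) q ^ 2 := by
  rw [jtheta_eq_qPochhammer_mul _ hq, qPochhammer_eq_one_sub_mul _ hq, inv_neg, inv_one,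
    mul_neg_one]
  ring

lemma jtheta_self_sq_eq (hp0 : p ≠ 0) (hp : ‖p‖ < 1) :
    ϑ(p) = qPochhammer p (p ^ 2) ^ 2 := by
  rw [jtheta_eq_qPochhammer_mul _ (norm_pow_lt_one_of_norm_lt_one hp two_ne_zero), sq p,
    mul_inv_cancel_right₀ hp0, sq]

lemma jtheta_neg_one_mul_half_periods (hp0 : p ≠ 0) (hp : ‖p‖ < 1) :
    ϑ(-1) * (ϑ(p) * ϑ(-p)) = 2 := by
  have hq := norm_pow_lt_one_of_norm_lt_one hp two_ne_zero
  have jtheta_neg := jtheta_self_sq_eq (neg_ne_zero.2 hp0) (by rwa [norm_neg])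
  rw [neg_sq] at jtheta_neg
  have euler := qPochhammer_self_sq_mul_neg_self_sq_mul_neg_sq hp
  rw [jtheta_neg_one_eq hq, jtheta_self_sq_eq hp0 hp, jtheta_neg, ← mul_pow, mul_assoc, ← mul_pow,
    mul_comm, mul_comm (qPochhammer (-p ^ 2) _), euler, one_pow, one_mul]

lemma jtheta_neg_half_period_ne_zero (hp0 : p ≠ 0) (hp : ‖p‖ < 1) : ϑ(-p) ≠ 0 := by
  have product := jtheta_neg_one_mul_half_periods hp0 hp
  intro h
  simp [h] at product

lemma jtheta_primitive_cube_root_half_periods_ne_zero (hp0 : p ≠ 0) (hp : ‖p‖ < 1)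
    (hw : IsPrimitiveRoot w 3) :
    ϑ(-w) ≠ 0 ∧ ϑ(p * w) ≠ 0 ∧ ϑ(-(p * w)) ≠ 0 := by
  have product := jtheta_neg_cube_root_mul_half_periods hp0 hp hw
  have product_ne : ϑ(-w) * (ϑ(p * w) * ϑ(-(p * w))) ≠ 0 :=
    product ▸ neg_ne_zero.2 (pow_ne_zero 2 (hw.ne_zero three_ne_zero))
  simpa only [mul_ne_zero_iff] using product_ne

theorem thetaQuotient_add_one (hp0 : p ≠ 0) (hp : ‖p‖ < 1) (hw : IsPrimitiveRoot w 3) :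
    thetaQuotient p w + 1 = -(ϑ(p) * ϑ(-(p * w))) / (ϑ(-p) * ϑ(p * w)) := by
  have hq := norm_pow_lt_one_of_norm_lt_one hp two_ne_zero
  have hw0 := hw.ne_zero three_ne_zero
  have hw3 := hw.pow_eq_one
  have neg_p_ne := jtheta_neg_half_period_ne_zero hp0 hp
  obtain ⟨neg_w_ne, pw_ne, -⟩ := jtheta_primitive_cube_root_half_periods_ne_zero hp0 hp hw
  have weierstrass := jtheta_weierstrass (s := -1) (b := p * w) (c := w ^ 2) (d := w) hp0 hp
    (neg_ne_zero.2 one_ne_zero) (mul_ne_zero hp0 hw0) (pow_ne_zero 2 hw0) hw0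
  rw [show -1 * w ^ 2 * w = -1 by linear_combination -hw3, show w ^ 2 / w = w by field_simp,
    show -1 * (p * w) * w ^ 2 = -p by linear_combination -p * hw3,
    show p * w / w ^ 2 = p * w ^ 2 by field_simp; linear_combination -hw3,
    show -1 * (p * w) * w = -(p * w ^ 2) by ring, show p * w / w = p by field_simp, neg_one_mul,
    neg_one_mul, neg_one_mul, jtheta_mul_cube_root_sq hp0 hp hw3,
    jtheta_neg_mul_cube_root_sq hp0 hp hw3, jtheta_cube_root_sq hq hw3,
    jtheta_neg_cube_root_sq hq hw3] at weierstrass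
  rw [thetaQuotient, div_add_one (mul_ne_zero neg_p_ne neg_w_ne),
    div_eq_div_iff (mul_ne_zero neg_p_ne neg_w_ne) (mul_ne_zero neg_p_ne pw_ne)]
  refine mul_left_cancel₀ (jtheta_primitive_cube_root_ne_zero hq hw) ?_
  linear_combination w ^ 2 * ϑ(-p) * weierstrass -
    ϑ(w) * ϑ(-w) * ϑ(-p) * (ϑ(-p) * ϑ(p * w) + (w ^ 3 + 1) * ϑ(p) * ϑ(-(p * w))) * hw3

theorem thetaQuotient_sub_one (hp0 : p ≠ 0) (hp : ‖p‖ < 1) (hw : IsPrimitiveRoot w 3) :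
    thetaQuotient p w - 1 = ϑ(w) ^ 2 * ϑ(p * w) * ϑ(p) / (ϑ(-(p * w)) * ϑ(-p) * ϑ(-w) ^ 2) := by
  have hq := norm_pow_lt_one_of_norm_lt_one hp two_ne_zero
  have hw0 := hw.ne_zero three_ne_zero
  have hw3 := hw.pow_eq_one
  have neg_p_ne := jtheta_neg_half_period_ne_zero hp0 hp
  obtain ⟨neg_w_ne, -, neg_pw_ne⟩ := jtheta_primitive_cube_root_half_periods_ne_zero hp0 hp hw
  have weierstrass := jtheta_weierstrass (s := 1) (b := -(p * w)) (c := w ^ 2) (d := -w) hp0 hp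
    one_ne_zero (neg_ne_zero.2 (mul_ne_zero hp0 hw0)) (pow_ne_zero 2 hw0) (neg_ne_zero.2 hw0)
  simp only [one_mul] at weierstrass
  rw [show w ^ 2 * -w = -1 by linear_combination -hw3, show w ^ 2 / -w = -w by field_simp,
    show -(p * w) * w ^ 2 = -p by linear_combination -p * hw3,
    show -(p * w) / w ^ 2 = -(p * w ^ 2) by field_simp; linear_combination hw3,
    show -(p * w) * -w = p * w ^ 2 by ring, show -(p * w) / -w = p by field_simp,
    jtheta_mul_cube_root_sq hp0 hp hw3, jtheta_neg_mul_cube_root_sq hp0 hp hw3,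
    jtheta_cube_root_sq hq hw3] at weierstrass
  rw [thetaQuotient, div_sub_one (mul_ne_zero neg_p_ne neg_w_ne),
    div_eq_div_iff (mul_ne_zero neg_p_ne neg_w_ne)
      (mul_ne_zero (mul_ne_zero neg_pw_ne neg_p_ne) (pow_ne_zero 2 neg_w_ne))]
  linear_combination w ^ 2 * ϑ(-p) * ϑ(-w) * weierstrass + ϑ(-p) * ϑ(-w) *
    (ϑ(-(p * w)) * ϑ(-p) * ϑ(-w) ^ 2 + (w ^ 3 + 1) * ϑ(w) ^ 2 * ϑ(p * w) * ϑ(p)) * hw3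

theorem thetaQuotient_add_two (hp0 : p ≠ 0) (hp : ‖p‖ < 1) (hw : IsPrimitiveRoot w 3) :
    thetaQuotient p w + 2 =
      p * ϑ(w) ^ 2 * ϑ(-w) * ϑ(-1) / (ϑ(-p) * ϑ(-(p * w)) * ϑ(p * w) ^ 2) := by
  have hw0 := hw.ne_zero three_ne_zero
  have hw3 := hw.pow_eq_one
  have hpw := mul_ne_zero hp0 hw0
  have neg_p_ne := jtheta_neg_half_period_ne_zero hp0 hp
  obtain ⟨-, pw_ne, neg_pw_ne⟩ := jtheta_primitive_cube_root_half_periods_ne_zero hp0 hp hw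
  have weierstrass := jtheta_weierstrass (s := 1) (b := p * w) (c := -(p * w)) (d := w) hp0 hp
    one_ne_zero hpw (neg_ne_zero.2 hpw) hw0
  simp only [one_mul] at weierstrass
  rw [show -(p * w) * w = -(p * w ^ 2) by ring, show -(p * w) / w = -p by field_simp,
    show p * w * -(p * w) = -(p ^ 2 * w ^ 2) by ring, show p * w / -(p * w) = -1 by field_simp,
    show p * w * w = p * w ^ 2 by ring, show p * w / w = p by field_simp,
    jtheta_neg_mul_cube_root_sq hp0 hp hw3, jtheta_neg_sq_mul_cube_root_sq hp0 hp hw3,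
    jtheta_mul_cube_root_sq hp0 hp hw3] at weierstrass
  rw [← one_add_one_eq_two, ← add_assoc, thetaQuotient_add_one hp0 hp hw,
    div_add_one (mul_ne_zero neg_p_ne pw_ne), div_eq_div_iff (mul_ne_zero neg_p_ne pw_ne)
      (mul_ne_zero (mul_ne_zero neg_p_ne neg_pw_ne) (pow_ne_zero 2 pw_ne))]
  linear_combination ϑ(-p) * ϑ(p * w) * weierstrass

theorem two_mul_thetaQuotient_add_one (hp0 : p ≠ 0) (hp : ‖p‖ < 1) (hw : IsPrimitiveRoot w 3) :
    2 * thetaQuotient p w + 1 = ϑ(w) ^ 2 * ϑ(-(p * w)) ^ 2 / (ϑ(p * w) ^ 2 * ϑ(-w) ^ 2) := by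
  have hw0 := hw.ne_zero three_ne_zero
  have hw3 := hw.pow_eq_one
  have neg_p_ne := jtheta_neg_half_period_ne_zero hp0 hp
  obtain ⟨neg_w_ne, pw_ne, -⟩ := jtheta_primitive_cube_root_half_periods_ne_zero hp0 hp hw
  have product_one := jtheta_neg_one_mul_half_periods hp0 hp
  have product_cube := jtheta_neg_cube_root_mul_half_periods hp0 hp hw
  have weierstrass := jtheta_weierstrass (s := 1) (b := p * w) (c := w) (d := -1) hp0 hp
    one_ne_zero (mul_ne_zero hp0 hw0) hw0 (neg_ne_zero.2 one_ne_zero)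
  simp only [one_mul, mul_neg_one, div_neg, div_one] at weierstrass
  rw [mul_assoc p w w, ← sq w, mul_div_cancel_right₀ p hw0,
    jtheta_mul_cube_root_sq hp0 hp hw3] at weierstrass
  rw [thetaQuotient, mul_div_assoc', div_add_one (mul_ne_zero neg_p_ne neg_w_ne),
    div_eq_div_iff (mul_ne_zero neg_p_ne neg_w_ne)
      (mul_ne_zero (pow_ne_zero 2 pw_ne) (pow_ne_zero 2 neg_w_ne))]
  linear_combination ϑ(-p) * ϑ(-w) * weierstrass +
    2 * w ^ 2 * ϑ(-1) * ϑ(p * w) * ϑ(-w) * product_cube +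
    w * ϑ(-1) * ϑ(p * w) * ϑ(-w) * product_one - 2 * w * ϑ(-1) * ϑ(p * w) * ϑ(-w) * hw3

end CubeRoot

section CubicThetaConstants

variable {p w : ℂ}

lemma qPochhammer_mul_primitive_cube_roots {x q : ℂ} (hq : ‖q‖ < 1) (hx : ‖x‖ < 1)
    (hw : IsPrimitiveRoot w 3) :
    qPochhammer (x * w) q * qPochhammer (x * w ^ 2) q =
      qPochhammer (x ^ 3) (q ^ 3) / qPochhammer x q := by
  rw [eq_div_iff (qPochhammer_ne_zero hq hx), mul_comm,
    qPochhammer_mul_cube_roots x hq (sq_add_self_add_one_of_isPrimitiveRoot hw)]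

lemma jtheta_primitive_cube_root_eq {q : ℂ} (hq : ‖q‖ < 1) (hw : IsPrimitiveRoot w 3) :
    jtheta w q = (1 - w) * (qPochhammer (q ^ 3) (q ^ 3) / qPochhammer q q) := by
  rw [jtheta_eq_qPochhammer_mul _ hq, qPochhammer_eq_one_sub_mul w hq, mul_assoc,
    inv_eq_sq_of_pow_three_eq_one hw.pow_eq_one, qPochhammer_mul_primitive_cube_roots hq hq hw]

lemma jtheta_neg_primitive_cube_root_eq {q : ℂ} (hq : ‖q‖ < 1) (hw : IsPrimitiveRoot w 3) :
    jtheta (-w) q = (1 + w) * (qPochhammer (-q ^ 3) (q ^ 3) / qPochhammer (-q) q) := by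
  have product := qPochhammer_mul_primitive_cube_roots hq (by rwa [norm_neg] : ‖-q‖ < 1) hw
  rw [neg_mul, neg_mul, Odd.neg_pow (by decide)] at product
  rw [jtheta_eq_qPochhammer_mul _ hq, qPochhammer_eq_one_sub_mul (-w) hq, mul_assoc, inv_neg,
    inv_eq_sq_of_pow_three_eq_one hw.pow_eq_one, mul_neg, mul_neg, product, sub_neg_eq_add]

lemma jtheta_mul_primitive_cube_root_eq (hp0 : p ≠ 0) (hp : ‖p‖ < 1) (hw : IsPrimitiveRoot w 3) :
    jtheta (p * w) (p ^ 2) = qPochhammer (p ^ 3) ((p ^ 3) ^ 2) / qPochhammer p (p ^ 2) := by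
  have hq := norm_pow_lt_one_of_norm_lt_one hp two_ne_zero
  have reflect : p ^ 2 * (p * w)⁻¹ = p * w ^ 2 := by
    rw [mul_inv, inv_eq_sq_of_pow_three_eq_one hw.pow_eq_one, sq p, mul_assoc,
      mul_inv_cancel_left₀ hp0]
  rw [jtheta_eq_qPochhammer_mul _ hq, reflect, qPochhammer_mul_primitive_cube_roots hq hp hw,
    pow_right_comm]

end CubicThetaConstants

section EtaQuotients

/-- The nome `p = e^{πiτ}`. -/
noncomputable def nome (τ : ℂ) : ℂ := exp (Real.pi * I * τ)

/-- The 24th root `e^{πiτ/24}` of the nome, the prefactor of `η(τ/2)`. -/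
noncomputable def nomeRoot (τ : ℂ) : ℂ := exp (Real.pi * I * τ / 24)

variable {τ w : ℂ}

lemma nome_ne_zero (τ : ℂ) : nome τ ≠ 0 := exp_ne_zero _

lemma nomeRoot_ne_zero (τ : ℂ) : nomeRoot τ ≠ 0 := exp_ne_zero _

lemma nomeRoot_pow (τ : ℂ) : nomeRoot τ ^ 24 = nome τ := by
  rw [nomeRoot, nome, ← exp_nat_mul]
  congr 1
  push_cast
  ring

lemma norm_nome_lt_one (hτ : 0 < τ.im) : ‖nome τ‖ < 1 := by
  rw [nome, norm_exp, Real.exp_lt_one_iff]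
  simpa [Real.pi_pos] using hτ

lemma dedekindEta_eq {s : ℂ} (k : ℕ) (hs : s = k * τ / 2) :
    dedekindEta s = nomeRoot τ ^ k * qPochhammer (nome τ ^ k) (nome τ ^ k) := by
  subst hs
  unfold dedekindEta qPochhammer nome nomeRoot
  simp only [← exp_nat_mul, ← exp_add]
  congr 2
  · ring
  · funext j
    congr 2
    ring

lemma qPochhammer_nome_pow {s : ℂ} (k : ℕ) (hs : s = k * τ / 2) :
    qPochhammer (nome τ ^ k) (nome τ ^ k) = dedekindEta s / nomeRoot τ ^ k := by
  rw [dedekindEta_eq k hs, mul_div_cancel_left₀ _ (pow_ne_zero k (nomeRoot_ne_zero τ))]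

lemma dedekindEta_ne_zero (hτ : 0 < τ.im) : dedekindEta τ ≠ 0 := by
  have hq := norm_pow_lt_one_of_norm_lt_one (norm_nome_lt_one hτ) two_ne_zero
  rw [dedekindEta_eq (τ := τ) 2 (by push_cast; ring)]
  exact mul_ne_zero (pow_ne_zero 2 (nomeRoot_ne_zero τ)) (qPochhammer_ne_zero hq hq)

lemma phi1_ne_zero (hτ : 0 < τ.im) : phi1 τ ≠ 0 :=
  div_ne_zero (pow_ne_zero 2 (dedekindEta_ne_zero (by simpa using hτ)))
    (pow_ne_zero 2 (dedekindEta_ne_zero hτ))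

lemma phi2_ne_zero (hτ : 0 < τ.im) : phi2 τ ≠ 0 :=
  div_ne_zero (pow_ne_zero 2 (dedekindEta_ne_zero (by simpa using hτ)))
    (pow_ne_zero 2 (dedekindEta_ne_zero hτ))

lemma phi3_ne_zero (hτ : 0 < τ.im) : phi3 τ ≠ 0 :=
  div_ne_zero (dedekindEta_ne_zero (by simpa using hτ)) (dedekindEta_ne_zero (by simpa using hτ))

lemma phi4_ne_zero (hτ : 0 < τ.im) : phi4 τ ≠ 0 :=
  div_ne_zero (dedekindEta_ne_zero (by simpa using hτ)) (dedekindEta_ne_zero (by simpa using hτ))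

lemma phi5_ne_zero (hτ : 0 < τ.im) : phi5 τ ≠ 0 :=
  div_ne_zero (dedekindEta_ne_zero (by simpa using hτ)) (dedekindEta_ne_zero hτ)

lemma qPochhammer_neg_nome_pow {s t : ℂ} (hτ : 0 < τ.im) {k : ℕ} (hk : k ≠ 0)
    (hs : s = k * τ / 2) (ht : t = k * τ) :
    qPochhammer (-nome τ ^ k) (nome τ ^ k) = dedekindEta t / dedekindEta s / nomeRoot τ ^ k := by
  have hq := norm_pow_lt_one_of_norm_lt_one (norm_nome_lt_one hτ) hk
  have root_ne := nomeRoot_ne_zero τ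
  rw [qPochhammer_neg_self hq, ← pow_mul, qPochhammer_nome_pow k hs,
    qPochhammer_nome_pow (s := t) (k * 2) (by push_cast; rw [ht]; ring), pow_mul]
  field_simp

lemma qPochhammer_nome_pow_sq {s t : ℂ} (hτ : 0 < τ.im) {k : ℕ} (hk : k ≠ 0)
    (hs : s = k * τ / 2) (ht : t = k * τ) :
    qPochhammer (nome τ ^ k) ((nome τ ^ k) ^ 2) =
      nomeRoot τ ^ k * (dedekindEta s / dedekindEta t) := by
  have hq := norm_pow_lt_one_of_norm_lt_one (norm_nome_lt_one hτ) hk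
  have root_ne := nomeRoot_ne_zero τ
  rw [qPochhammer_self_sq hq, ← pow_mul, qPochhammer_nome_pow k hs,
    qPochhammer_nome_pow (s := t) (k * 2) (by push_cast; rw [ht]; ring), pow_mul]
  field_simp

lemma jtheta_neg_one_eq_phi2 (hτ : 0 < τ.im) :
    jtheta (-1) (nome τ ^ 2) = 2 * phi2 τ / nomeRoot τ ^ 4 := by
  rw [jtheta_neg_one_eq (norm_pow_lt_one_of_norm_lt_one (norm_nome_lt_one hτ) two_ne_zero),
    qPochhammer_neg_nome_pow (s := τ) (t := 2 * τ) hτ two_ne_zero (by push_cast; ring)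
      (by push_cast; ring), phi2]
  ring

lemma jtheta_nome_eq_phi1 (hτ : 0 < τ.im) :
    jtheta (nome τ) (nome τ ^ 2) = nomeRoot τ ^ 2 * phi1 τ := by
  have pochhammer := qPochhammer_nome_pow_sq (s := τ / 2) (t := τ) hτ one_ne_zero
    (by push_cast; ring) (by push_cast; ring)
  rw [pow_one, pow_one] at pochhammer
  rw [jtheta_self_sq_eq (nome_ne_zero τ) (norm_nome_lt_one hτ), pochhammer, phi1]
  ring

lemma jtheta_neg_nome_eq_phi (hτ : 0 < τ.im) :
    jtheta (-nome τ) (nome τ ^ 2) = nomeRoot τ ^ 2 / (phi1 τ * phi2 τ) := by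
  have product := jtheta_neg_one_mul_half_periods (nome_ne_zero τ) (norm_nome_lt_one hτ)
  have root_ne := nomeRoot_ne_zero τ
  rw [jtheta_neg_one_eq_phi2 hτ, jtheta_nome_eq_phi1 hτ] at product
  rw [eq_div_iff (mul_ne_zero (phi1_ne_zero hτ) (phi2_ne_zero hτ))]
  field_simp at product
  linear_combination product

lemma jtheta_primitive_cube_root_sq_eq_phi5 (hτ : 0 < τ.im) (hw : IsPrimitiveRoot w 3) :
    jtheta w (nome τ ^ 2) ^ 2 = -3 * w * phi5 τ ^ 2 / nomeRoot τ ^ 8 := by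
  have hq := norm_pow_lt_one_of_norm_lt_one (norm_nome_lt_one hτ) two_ne_zero
  have one_sub_sq : (1 - w) ^ 2 = -3 * w := by
    linear_combination sq_add_self_add_one_of_isPrimitiveRoot hw
  have root_ne := nomeRoot_ne_zero τ
  rw [jtheta_primitive_cube_root_eq hq hw, ← pow_mul,
    qPochhammer_nome_pow (s := 3 * τ) (2 * 3) (by push_cast; ring),
    qPochhammer_nome_pow (s := τ) 2 (by push_cast; ring), mul_pow, one_sub_sq, phi5]
  field_simp
  ring

lemma jtheta_neg_primitive_cube_root_eq_phi (hτ : 0 < τ.im) (hw : IsPrimitiveRoot w 3) :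
    jtheta (-w) (nome τ ^ 2) = -w ^ 2 * phi4 τ / (phi5 τ * nomeRoot τ ^ 4) := by
  have hq := norm_pow_lt_one_of_norm_lt_one (norm_nome_lt_one hτ) two_ne_zero
  have one_add : 1 + w = -w ^ 2 := by
    linear_combination sq_add_self_add_one_of_isPrimitiveRoot hw
  have root_ne := nomeRoot_ne_zero τ
  rw [jtheta_neg_primitive_cube_root_eq hq hw, ← pow_mul,
    qPochhammer_neg_nome_pow (s := 3 * τ) (t := 6 * τ) hτ (by norm_num) (by push_cast; ring)
      (by push_cast; ring),
    qPochhammer_neg_nome_pow (s := τ) (t := 2 * τ) hτ two_ne_zero (by push_cast; ring)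
      (by push_cast; ring), one_add, phi4, phi5]
  field_simp
  ring

lemma jtheta_nome_mul_primitive_cube_root_eq_phi (hτ : 0 < τ.im) (hw : IsPrimitiveRoot w 3) :
    jtheta (nome τ * w) (nome τ ^ 2) = nomeRoot τ ^ 2 * phi3 τ / phi5 τ := by
  have pochhammer := qPochhammer_nome_pow_sq (s := τ / 2) (t := τ) hτ one_ne_zero
    (by push_cast; ring) (by push_cast; ring)
  rw [pow_one, pow_one] at pochhammer
  have root_ne := nomeRoot_ne_zero τ
  rw [jtheta_mul_primitive_cube_root_eq (nome_ne_zero τ) (norm_nome_lt_one hτ) hw, pochhammer,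
    qPochhammer_nome_pow_sq (s := 3 * τ / 2) (t := 3 * τ) hτ three_ne_zero (by push_cast; ring)
      (by push_cast; ring), phi3, phi5]
  field_simp

lemma jtheta_neg_nome_mul_primitive_cube_root_eq_phi (hτ : 0 < τ.im)
    (hw : IsPrimitiveRoot w 3) :
    jtheta (-(nome τ * w)) (nome τ ^ 2) = nomeRoot τ ^ 2 * phi5 τ ^ 2 / (phi3 τ * phi4 τ) := by
  have product := jtheta_neg_cube_root_mul_half_periods (nome_ne_zero τ) (norm_nome_lt_one hτ) hw
  have root_ne := nomeRoot_ne_zero τ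
  have w_ne := hw.ne_zero three_ne_zero
  have phi5_ne := phi5_ne_zero hτ
  rw [jtheta_neg_primitive_cube_root_eq_phi hτ hw,
    jtheta_nome_mul_primitive_cube_root_eq_phi hτ hw] at product
  rw [eq_div_iff (mul_ne_zero (phi3_ne_zero hτ) (phi4_ne_zero hτ))]
  generalize jtheta (-(nome τ * w)) (nome τ ^ 2) = x at product ⊢
  field_simp at product
  linear_combination -product

theorem thetaQuotient_nome_eq_phi (hτ : 0 < τ.im) (hw : IsPrimitiveRoot w 3) :
    thetaQuotient (nome τ) w =
      -2 * phi1 τ * phi2 τ ^ 2 * phi5 τ ^ 3 / (phi3 τ * phi4 τ ^ 2) := by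
  have root_ne := nomeRoot_ne_zero τ
  have w_ne := hw.ne_zero three_ne_zero
  have phi1_ne := phi1_ne_zero hτ
  have phi2_ne := phi2_ne_zero hτ
  have phi3_ne := phi3_ne_zero hτ
  have phi4_ne := phi4_ne_zero hτ
  have phi5_ne := phi5_ne_zero hτ
  rw [thetaQuotient, jtheta_neg_one_eq_phi2 hτ, jtheta_neg_nome_eq_phi hτ,
    jtheta_neg_primitive_cube_root_eq_phi hτ hw,
    jtheta_neg_nome_mul_primitive_cube_root_eq_phi hτ hw]
  field_simp

theorem thetaQuotient_nome_add_one_eq_phi (hτ : 0 < τ.im) (hw : IsPrimitiveRoot w 3) :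
    thetaQuotient (nome τ) w + 1 =
      -(phi1 τ ^ 2 * phi2 τ * phi5 τ ^ 3) / (phi3 τ ^ 2 * phi4 τ) := by
  have root_ne := nomeRoot_ne_zero τ
  have phi1_ne := phi1_ne_zero hτ
  have phi2_ne := phi2_ne_zero hτ
  have phi3_ne := phi3_ne_zero hτ
  have phi4_ne := phi4_ne_zero hτ
  have phi5_ne := phi5_ne_zero hτ
  rw [thetaQuotient_add_one (nome_ne_zero τ) (norm_nome_lt_one hτ) hw, jtheta_nome_eq_phi1 hτ,
    jtheta_neg_nome_eq_phi hτ, jtheta_nome_mul_primitive_cube_root_eq_phi hτ hw,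
    jtheta_neg_nome_mul_primitive_cube_root_eq_phi hτ hw]
  field_simp

theorem thetaQuotient_nome_sub_one_eq_phi (hτ : 0 < τ.im) (hw : IsPrimitiveRoot w 3) :
    thetaQuotient (nome τ) w - 1 =
      -3 * phi1 τ ^ 2 * phi2 τ * phi3 τ ^ 2 * phi5 τ / phi4 τ := by
  have root_ne := nomeRoot_ne_zero τ
  have w_ne := hw.ne_zero three_ne_zero
  have phi1_ne := phi1_ne_zero hτ
  have phi2_ne := phi2_ne_zero hτ
  have phi3_ne := phi3_ne_zero hτ
  have phi4_ne := phi4_ne_zero hτ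
  have phi5_ne := phi5_ne_zero hτ
  rw [thetaQuotient_sub_one (nome_ne_zero τ) (norm_nome_lt_one hτ) hw, jtheta_nome_eq_phi1 hτ,
    jtheta_neg_nome_eq_phi hτ, jtheta_primitive_cube_root_sq_eq_phi5 hτ hw,
    jtheta_neg_primitive_cube_root_eq_phi hτ hw, jtheta_nome_mul_primitive_cube_root_eq_phi hτ hw,
    jtheta_neg_nome_mul_primitive_cube_root_eq_phi hτ hw]
  field_simp
  rw [hw.pow_eq_one]

theorem thetaQuotient_nome_add_two_eq_phi (hτ : 0 < τ.im) (hw : IsPrimitiveRoot w 3) :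
    thetaQuotient (nome τ) w + 2 =
      6 * phi1 τ * phi2 τ ^ 2 * phi4 τ ^ 2 * phi5 τ / phi3 τ := by
  have root_ne := nomeRoot_ne_zero τ
  have phi1_ne := phi1_ne_zero hτ
  have phi2_ne := phi2_ne_zero hτ
  have phi3_ne := phi3_ne_zero hτ
  have phi4_ne := phi4_ne_zero hτ
  have phi5_ne := phi5_ne_zero hτ
  rw [thetaQuotient_add_two (nome_ne_zero τ) (norm_nome_lt_one hτ) hw, jtheta_neg_one_eq_phi2 hτ,
    jtheta_neg_nome_eq_phi hτ, jtheta_primitive_cube_root_sq_eq_phi5 hτ hw,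
    jtheta_neg_primitive_cube_root_eq_phi hτ hw, jtheta_nome_mul_primitive_cube_root_eq_phi hτ hw,
    jtheta_neg_nome_mul_primitive_cube_root_eq_phi hτ hw, ← nomeRoot_pow τ]
  field_simp
  linear_combination 6 * hw.pow_eq_one

theorem two_mul_thetaQuotient_nome_add_one_eq_phi (hτ : 0 < τ.im) (hw : IsPrimitiveRoot w 3) :
    2 * thetaQuotient (nome τ) w + 1 =
      -3 * phi5 τ ^ 10 / (phi3 τ ^ 4 * phi4 τ ^ 4) := by
  have root_ne := nomeRoot_ne_zero τ
  have w_ne := hw.ne_zero three_ne_zero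
  have phi3_ne := phi3_ne_zero hτ
  have phi4_ne := phi4_ne_zero hτ
  have phi5_ne := phi5_ne_zero hτ
  rw [two_mul_thetaQuotient_add_one (nome_ne_zero τ) (norm_nome_lt_one hτ) hw,
    jtheta_primitive_cube_root_sq_eq_phi5 hτ hw, jtheta_neg_primitive_cube_root_eq_phi hτ hw,
    jtheta_nome_mul_primitive_cube_root_eq_phi hτ hw,
    jtheta_neg_nome_mul_primitive_cube_root_eq_phi hτ hw]
  field_simp
  rw [hw.pow_eq_one]

end EtaQuotients

/-- the Hauptmodul ζ in terms of the eta quotients. -/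
theorem hauptmodul_eta_quotient_identities (τ : ℂ) (hτ : 0 < τ.im) :
    hauptmodul τ = -2 * phi1 τ * phi2 τ ^ 2 * phi5 τ ^ 3 / (phi3 τ * phi4 τ ^ 2) ∧
    hauptmodul τ + 1 = -(phi1 τ ^ 2 * phi2 τ * phi5 τ ^ 3) / (phi3 τ ^ 2 * phi4 τ) ∧
    hauptmodul τ - 1 = -3 * phi1 τ ^ 2 * phi2 τ * phi3 τ ^ 2 * phi5 τ / phi4 τ ∧
    hauptmodul τ + 2 = 6 * phi1 τ * phi2 τ ^ 2 * phi4 τ ^ 2 * phi5 τ / phi3 τ ∧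
    2 * hauptmodul τ + 1 = -3 * phi5 τ ^ 10 / (phi3 τ ^ 4 * phi4 τ ^ 4) := by
  have hω : IsPrimitiveRoot (exp (2 * Real.pi * I / 3)) 3 := isPrimitiveRoot_exp 3 three_ne_zero
  have hauptmodul_eq : hauptmodul τ = thetaQuotient (nome τ) (exp (2 * Real.pi * I / 3)) := rfl
  rw [hauptmodul_eq]
  exact ⟨thetaQuotient_nome_eq_phi hτ hω, thetaQuotient_nome_add_one_eq_phi hτ hω,
    thetaQuotient_nome_sub_one_eq_phi hτ hω, thetaQuotient_nome_add_two_eq_phi hτ hω,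
    two_mul_thetaQuotient_nome_add_one_eq_phi hτ hω⟩
end

section
/- Picard's algebraic solution in the ζ-parametrization: define t(ζ) = ζ(ζ+2)³/(2ζ+1)³, q(ζ) = ζ(ζ+2)/(2ζ+1), and p(ζ) = (2ζ+1)/(2(1−ζ)(ζ+2)). Then (i) q⁴ − 4tq³ + 6tq² − 4tq + t² = 0 identically in ζ; and (ii) for all ζ ∈ ℂ ∖ {0, 1, −1, −2, −1/2}, with the operator δ = [ζ(ζ+1)(ζ−1)(ζ+2)/(2(2ζ+1)²)]·d/dζ and the Painlevé VI Hamiltonian H with parameters α0 = α1 = α3 = α4 = 0, α2 = 1/2, one has δ(q)(ζ) = (∂H/∂p)(q(ζ),p(ζ),t(ζ)) and δ(p)(ζ) = −(∂H/∂q)(q(ζ),p(ζ),t(ζ)). -/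
/-- The Painlevé VI Hamiltonian. -/
noncomputable def PVIHamiltonian (α0 α1 α2 α3 α4 q p t : ℂ) : ℂ :=
  q * (q - 1) * (q - t) * p ^ 2
    - ((α0 - 1) * q * (q - 1) + α3 * q * (q - t) + α4 * (q - 1) * (q - t)) * p
    + α2 * (α1 + α2) * (q - t)

/-- t(ζ) for Picard's algebraic solution. -/
noncomputable def picardT (ζ : ℂ) : ℂ := ζ * (ζ + 2) ^ 3 / (2 * ζ + 1) ^ 3

/-- q(ζ) for Picard's algebraic solution. -/
noncomputable def picardQ (ζ : ℂ) : ℂ := ζ * (ζ + 2) / (2 * ζ + 1)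

/-- p(ζ) for Picard's algebraic solution. -/
noncomputable def picardP (ζ : ℂ) : ℂ := (2 * ζ + 1) / (2 * (1 - ζ) * (ζ + 2))

/-!
In terms of `r = (ζ + 2) / (2 * ζ + 1)` the solution is `q = ζ * r`, `t = ζ * r ^ 3`, and the
quartic becomes `ζ² * r ^ 4` times a difference of two squares, one of whose factors is
`r * (2 * ζ + 1) - (ζ + 2)`.

For Hamilton's equations, `δ` is `(q * (q - 1) / 2) * d/dζ`, and at Picard's parameters the partial
derivatives of `H` are polynomials in `q` and the shifted products `A = q * p + 1/2`,
`B = (q - 1) * p + 1/2`, `C = (q - t) * p + 1/2`, namely `∂H/∂p = 2 * q * (q - 1) * C` and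
`-∂H/∂q = -A * B - (A + B - 1) * C`. On the curve `A = 1 / (2 * (1 - ζ))`, `B = 1 / (2 * (ζ + 2))`
and `C = q' / 4`, while `p = A - B` gives `p' = 2 * (A ^ 2 + B ^ 2)`.
-/

section Hamiltonian

variable (α0 α1 α2 α3 α4 q p t : ℂ)

theorem hasDerivAt_PVIHamiltonian_p :
    HasDerivAt (fun p' => PVIHamiltonian α0 α1 α2 α3 α4 q p' t)
      (2 * q * (q - 1) * (q - t) * p
        - ((α0 - 1) * q * (q - 1) + α3 * q * (q - t) + α4 * (q - 1) * (q - t))) p := by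
  have hquad := (hasDerivAt_pow 2 p).const_mul (q * (q - 1) * (q - t))
  have hlin := (hasDerivAt_id' p).const_mul
    ((α0 - 1) * q * (q - 1) + α3 * q * (q - t) + α4 * (q - 1) * (q - t))
  refine ((hquad.fun_sub hlin).add_const (α2 * (α1 + α2) * (q - t))).congr_deriv ?_
  push_cast
  ring

theorem hasDerivAt_PVIHamiltonian_q :
    HasDerivAt (fun q' => PVIHamiltonian α0 α1 α2 α3 α4 q' p t)
      (((q - 1) * (q - t) + q * (q - t) + q * (q - 1)) * p ^ 2
        - ((α0 - 1) * (2 * q - 1) + α3 * (2 * q - t) + α4 * (2 * q - 1 - t)) * p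
        + α2 * (α1 + α2)) q := by
  have hq := hasDerivAt_id' q
  have hq1 := hq.sub_const 1
  have hqt := hq.sub_const t
  have hquad := ((hq.fun_mul hq1).fun_mul hqt).mul_const (p ^ 2)
  have hlin := ((((hq.const_mul (α0 - 1)).fun_mul hq1).fun_add
    ((hq.const_mul α3).fun_mul hqt)).fun_add ((hq1.const_mul α4).fun_mul hqt)).mul_const p
  refine ((hquad.fun_sub hlin).fun_add (hqt.const_mul (α2 * (α1 + α2)))).congr_deriv ?_
  ring

theorem deriv_PVIHamiltonian_picard_p :
    deriv (fun p' => PVIHamiltonian 0 0 (1 / 2) 0 0 q p' t) p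
      = 2 * q * (q - 1) * ((q - t) * p + 1 / 2) := by
  rw [(hasDerivAt_PVIHamiltonian_p ..).deriv]
  ring

theorem neg_deriv_PVIHamiltonian_picard_q :
    -deriv (fun q' => PVIHamiltonian 0 0 (1 / 2) 0 0 q' p t) q
      = -(q * p + 1 / 2) * ((q - 1) * p + 1 / 2)
        - ((q * p + 1 / 2) + ((q - 1) * p + 1 / 2) - 1) * ((q - t) * p + 1 / 2) := by
  rw [(hasDerivAt_PVIHamiltonian_q ..).deriv]
  ring

end Hamiltonian

theorem quartic_eq_zero_of_mul_eq {R : Type*} [CommRing R] {ζ r : R}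
    (h : r * (2 * ζ + 1) = ζ + 2) :
    (ζ * r) ^ 4 - 4 * (ζ * r ^ 3) * (ζ * r) ^ 3 + 6 * (ζ * r ^ 3) * (ζ * r) ^ 2
      - 4 * (ζ * r ^ 3) * (ζ * r) + (ζ * r ^ 3) ^ 2 = 0 := by
  have h_factor : (r - ζ) ^ 2 - (2 * (ζ * r - 1)) ^ 2 = 0 := by
    linear_combination (r - ζ - 2 * (ζ * r - 1)) * h
  linear_combination ζ ^ 2 * r ^ 4 * h_factor

section PicardCurve

variable {ζ : ℂ}

theorem picardQ_eq_mul : picardQ ζ = ζ * ((ζ + 2) / (2 * ζ + 1)) :=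
  mul_div_assoc ..

theorem picardT_eq_mul_pow : picardT ζ = ζ * ((ζ + 2) / (2 * ζ + 1)) ^ 3 := by
  rw [picardT, div_pow, mul_div_assoc]

theorem picard_quartic (hden : 2 * ζ + 1 ≠ 0) :
    picardQ ζ ^ 4 - 4 * picardT ζ * picardQ ζ ^ 3 + 6 * picardT ζ * picardQ ζ ^ 2
      - 4 * picardT ζ * picardQ ζ + picardT ζ ^ 2 = 0 := by
  rw [picardQ_eq_mul, picardT_eq_mul_pow]
  exact quartic_eq_zero_of_mul_eq (div_mul_cancel₀ _ hden)

theorem picardQ_sub_one (hden : 2 * ζ + 1 ≠ 0) :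
    picardQ ζ - 1 = (ζ + 1) * (ζ - 1) / (2 * ζ + 1) := by
  rw [picardQ, div_sub_one hden]
  ring

theorem picardQ_sub_picardT :
    picardQ ζ - picardT ζ = 3 * ζ * (ζ + 1) * (ζ - 1) * (ζ + 2) / (2 * ζ + 1) ^ 3 := by
  rw [picardQ, picardT]
  field_simp
  ring

theorem picardQ_mul_picardQ_sub_one_div_two (hden : 2 * ζ + 1 ≠ 0) :
    picardQ ζ * (picardQ ζ - 1) / 2
      = ζ * (ζ + 1) * (ζ - 1) * (ζ + 2) / (2 * (2 * ζ + 1) ^ 2) := by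
  rw [picardQ_sub_one hden, picardQ]
  field_simp

theorem hasDerivAt_picardQ (hden : 2 * ζ + 1 ≠ 0) :
    HasDerivAt picardQ (2 * (ζ ^ 2 + ζ + 1) / (2 * ζ + 1) ^ 2) ζ := by
  have hid := hasDerivAt_id' ζ
  refine ((hid.fun_mul (hid.add_const 2)).fun_div
    ((hid.const_mul 2).add_const 1) hden).congr_deriv ?_
  ring

theorem hasDerivAt_picardP (hone : 1 - ζ ≠ 0) (htwo : ζ + 2 ≠ 0) :
    HasDerivAt picardP
      (2 * ((1 / (2 * (1 - ζ))) ^ 2 + (1 / (2 * (ζ + 2))) ^ 2)) ζ := by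
  have hid := hasDerivAt_id' ζ
  have hnum := (hid.const_mul 2).add_const 1
  have hprod := ((hid.const_sub 1).const_mul 2).fun_mul (hid.add_const 2)
  have hprod_ne : 2 * (1 - ζ) * (ζ + 2) ≠ 0 := mul_ne_zero (mul_ne_zero two_ne_zero hone) htwo
  refine (hnum.fun_div hprod hprod_ne).congr_deriv ?_
  field_simp
  ring

theorem picardQ_mul_picardP_add_half (hden : 2 * ζ + 1 ≠ 0) (hone : 1 - ζ ≠ 0)
    (htwo : ζ + 2 ≠ 0) :
    picardQ ζ * picardP ζ + 1 / 2 = 1 / (2 * (1 - ζ)) := by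
  rw [picardQ, picardP, div_mul_div_cancel₀ hden]
  field_simp
  ring

theorem picardQ_sub_one_mul_picardP_add_half (hden : 2 * ζ + 1 ≠ 0) (hone : 1 - ζ ≠ 0)
    (htwo : ζ + 2 ≠ 0) :
    (picardQ ζ - 1) * picardP ζ + 1 / 2 = 1 / (2 * (ζ + 2)) := by
  rw [picardQ_sub_one hden, picardP, div_mul_div_cancel₀ hden]
  field_simp
  ring

theorem picardQ_sub_picardT_mul_picardP_add_half (hden : 2 * ζ + 1 ≠ 0) (hone : 1 - ζ ≠ 0)
    (htwo : ζ + 2 ≠ 0) :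
    (picardQ ζ - picardT ζ) * picardP ζ + 1 / 2 = (ζ ^ 2 + ζ + 1) / (2 * (2 * ζ + 1) ^ 2) := by
  -- `field_simp` looks for the nonvanishing of this factor in the form `ζ * 2 + 1 ≠ 0`.
  rw [mul_comm 2 ζ] at hden
  rw [picardQ_sub_picardT, picardP]
  field_simp
  ring

theorem picardQ_hamilton_eq (hden : 2 * ζ + 1 ≠ 0) (hone : 1 - ζ ≠ 0) (htwo : ζ + 2 ≠ 0) :
    picardQ ζ * (picardQ ζ - 1) / 2 * deriv picardQ ζ
      = deriv (fun p' => PVIHamiltonian 0 0 (1 / 2) 0 0 (picardQ ζ) p' (picardT ζ))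
          (picardP ζ) := by
  rw [deriv_PVIHamiltonian_picard_p, (hasDerivAt_picardQ hden).deriv,
    picardQ_sub_picardT_mul_picardP_add_half hden hone htwo]
  field_simp

theorem picardP_hamilton_eq (hden : 2 * ζ + 1 ≠ 0) (hone : 1 - ζ ≠ 0) (htwo : ζ + 2 ≠ 0) :
    picardQ ζ * (picardQ ζ - 1) / 2 * deriv picardP ζ
      = -deriv (fun q' => PVIHamiltonian 0 0 (1 / 2) 0 0 q' (picardP ζ) (picardT ζ))
          (picardQ ζ) := by
  rw [neg_deriv_PVIHamiltonian_picard_q, picardQ_mul_picardP_add_half hden hone htwo,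
    picardQ_sub_one_mul_picardP_add_half hden hone htwo,
    picardQ_sub_picardT_mul_picardP_add_half hden hone htwo,
    picardQ_mul_picardQ_sub_one_div_two hden, (hasDerivAt_picardP hone htwo).deriv]
  rw [mul_comm 2 ζ] at hden
  field_simp
  ring

theorem picard_denominators_ne_zero (hζ : ζ ∉ ({0, 1, -1, -2, -(1/2)} : Set ℂ)) :
    2 * ζ + 1 ≠ 0 ∧ 1 - ζ ≠ 0 ∧ ζ + 2 ≠ 0 := by
  simp only [Set.mem_insert_iff, Set.mem_singleton_iff, not_or] at hζ
  obtain ⟨-, hne_one, -, hne_neg_two, hne_neg_half⟩ := hζ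
  refine ⟨fun h => hne_neg_half ?_, fun h => hne_one ?_, fun h => hne_neg_two ?_⟩
  · linear_combination h / 2
  · linear_combination -h
  · linear_combination h

end PicardCurve

/-- Picard's algebraic solution in the ζ-parametrization solves
the quartic equation and the Painlevé VI Hamiltonian system with
α₀ = α₁ = α₃ = α₄ = 0, α₂ = 1/2. -/
theorem picard_solution :
    (∀ ζ : ℂ, ζ ∉ ({0, 1, -1, -2, -(1/2)} : Set ℂ) →
      picardQ ζ ^ 4 - 4 * picardT ζ * picardQ ζ ^ 3 + 6 * picardT ζ * picardQ ζ ^ 2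
        - 4 * picardT ζ * picardQ ζ + picardT ζ ^ 2 = 0) ∧
    (∀ ζ : ℂ, ζ ∉ ({0, 1, -1, -2, -(1/2)} : Set ℂ) →
      ζ * (ζ + 1) * (ζ - 1) * (ζ + 2) / (2 * (2 * ζ + 1) ^ 2) * deriv picardQ ζ
        = deriv (fun p' => PVIHamiltonian 0 0 (1/2) 0 0 (picardQ ζ) p' (picardT ζ))
            (picardP ζ) ∧
      ζ * (ζ + 1) * (ζ - 1) * (ζ + 2) / (2 * (2 * ζ + 1) ^ 2) * deriv picardP ζ
        = - deriv (fun q' => PVIHamiltonian 0 0 (1/2) 0 0 q' (picardP ζ) (picardT ζ))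
            (picardQ ζ)) := by
  refine ⟨fun ζ hζ => ?_, fun ζ hζ => ?_⟩ <;>
    obtain ⟨hden, hone, htwo⟩ := picard_denominators_ne_zero hζ
  · exact picard_quartic hden
  · rw [← picardQ_mul_picardQ_sub_one_div_two hden]
    exact ⟨picardQ_hamilton_eq hden hone htwo, picardP_hamilton_eq hden hone htwo⟩
end
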